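/- arXiv:1705.07630 — 2 statements merged into one kernel-verified Lean document; each statement's English description precedes it below -/
import Mathlib

section
/- Let P be a finite poset with unique minimal element x₀, r = rank P⁺, and r_max the maximum of r(y₁,x₁,…,y_t,x_t) over all sequences satisfying condition N. Then for an integer i there exists a minimal element ν of the poset (T(P), ≤) with ν(x₀) = i if and only if r ≤ i ≤ r_max. -/
/-- The rank of the interval `[x,y]`: the maximum length of a chain from `x` to `y`. -/
noncomputable def intervalRank {Q : Type*} [PartialOrder Q] (x y : Q) : ℕ :=
  sSup {n : ℕ | ∃ c : Fin (n + 1) → Q, StrictMono c ∧ c 0 = x ∧ c (Fin.last n) = y}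

/-- `ν ∈ T(P)`: here `Q` plays the role of `P⁺`, with `⊤ = ∞`. -/
def IsTP {Q : Type*} [PartialOrder Q] [OrderTop Q] (ν : Q → ℕ) : Prop :=
  ν ⊤ = 0 ∧ StrictAnti ν

/-- The order on `T(P)`: `μ ≤ ν` iff `ν - μ ∈ \overline{T}(P)`, i.e. `ν - μ` is
nonnegative and order-reversing. -/
def LeTP {Q : Type*} [PartialOrder Q] (μ ν : Q → ℕ) : Prop :=
  (∀ a : Q, μ a ≤ ν a) ∧
  (∀ a b : Q, a ≤ b → (ν b : ℤ) - (μ b : ℤ) ≤ (ν a : ℤ) - (μ a : ℤ))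

/-- `ν` is a minimal element of the poset `(T(P), ≤)`. -/
def IsMinTP {Q : Type*} [PartialOrder Q] [OrderTop Q] (ν : Q → ℕ) : Prop :=
  IsTP ν ∧ ∀ μ : Q → ℕ, IsTP μ → LeTP μ ν → μ = ν

/-- Condition N (elements of the sequence lie in `P = Q ∖ {⊤}`, `x₀ = ⊥`). -/
def CondN {Q : Type*} [PartialOrder Q] [OrderBot Q] (t : ℕ) (y x : Fin t → Q) : Prop :=
  (∀ h : 0 < t, x ⟨0, h⟩ ≠ ⊥) ∧
  (∀ i : Fin t, x i < y i) ∧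
  (∀ (i : ℕ) (h₁ : i < t) (h₂ : i + 1 < t), x ⟨i, h₁⟩ < y ⟨i + 1, h₂⟩) ∧
  (∀ i j : Fin t, i < j → ¬ x j ≤ y i)

/-- `x_0 = x₀, x_1, …, x_t`: the sequence of `x`'s prefixed with the minimum. -/
def seqX {Q : Type*} (x₀ : Q) {t : ℕ} (x : Fin t → Q) : Fin (t + 1) → Q :=
  Fin.cons x₀ x

/-- `y_1, …, y_t, y_{t+1} = ∞`: the sequence of `y`'s suffixed with `∞`. -/
def seqY {Q : Type*} (inf : Q) {t : ℕ} (y : Fin t → Q) : Fin (t + 1) → Q :=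
  Fin.snoc y inf

/-- The integer `r(y₁,x₁,…,y_t,x_t)` attached to a sequence with condition N. -/
noncomputable def rSeq {Q : Type*} [PartialOrder Q] [BoundedOrder Q] (t : ℕ)
    (y x : Fin t → Q) : ℤ :=
  (∑ i : Fin t,
    ((intervalRank (seqX (⊥ : Q) x i.castSucc) (y i) : ℤ) -
      (intervalRank (x i) (y i) : ℤ))) +
  (intervalRank (seqX (⊥ : Q) x (Fin.last t)) (⊤ : Q) : ℤ)

section IntervalRank

variable {Q : Type*} [PartialOrder Q]

theorem bddAbove_chainLengths [Fintype Q] (x y : Q) :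
    BddAbove {n : ℕ | ∃ c : Fin (n + 1) → Q, StrictMono c ∧ c 0 = x ∧ c (Fin.last n) = y} := by
  refine ⟨Fintype.card Q, ?_⟩
  rintro n ⟨c, hc, -, -⟩
  have := Fintype.card_le_of_injective c hc.injective
  simp only [Fintype.card_fin] at this
  omega

/-- A series from `x` to `y` has length at most `intervalRank x y`. -/
theorem length_le_intervalRank [Fintype Q] (p : LTSeries Q) :
    p.length ≤ intervalRank p.head p.last := by
  exact le_csSup (bddAbove_chainLengths _ _) ⟨p.toFun, p.strictMono, rfl, rfl⟩

/-- The interval rank of a nonempty interval is attained by some series. -/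
theorem exists_ltSeries_length_eq_intervalRank [Fintype Q] {x y : Q} (h : x ≤ y) :
    ∃ p : LTSeries Q, p.head = x ∧ p.last = y ∧ p.length = intervalRank x y := by
  have hmem := Nat.sSup_mem
    (s := {n : ℕ | ∃ c : Fin (n + 1) → Q, StrictMono c ∧ c 0 = x ∧ c (Fin.last n) = y})
    (by
      rcases h.eq_or_lt with rfl | h
      · exact ⟨0, fun _ => x, fun i j hij => by omega, rfl, rfl⟩
      · refine ⟨1, ![x, y], ?_, rfl, rfl⟩
        intro i j hij
        fin_cases i <;> fin_cases j <;> simp_all)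
    (bddAbove_chainLengths x y)
  obtain ⟨c, hc, h0, h1⟩ := hmem
  exact ⟨LTSeries.mk _ c hc, h0, h1, rfl⟩

theorem intervalRank_add_le [Fintype Q] {x y z : Q} (hxy : x ≤ y) (hyz : y ≤ z) :
    intervalRank x y + intervalRank y z ≤ intervalRank x z := by
  obtain ⟨p, rfl, hpy, hp⟩ := exists_ltSeries_length_eq_intervalRank hxy
  obtain ⟨q, hqy, rfl, hq⟩ := exists_ltSeries_length_eq_intervalRank hyz
  have := length_le_intervalRank (p.smash q (hpy.trans hqy.symm))
  rw [RelSeries.head_smash, RelSeries.last_smash, RelSeries.smash_length] at this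
  omega

theorem one_le_intervalRank [Fintype Q] {x y : Q} (h : x < y) : 1 ≤ intervalRank x y := by
  have hc : StrictMono ![x, y] := by
    intro i j hij
    fin_cases i <;> fin_cases j <;> simp_all
  exact length_le_intervalRank (LTSeries.mk 1 ![x, y] hc)

theorem intervalRank_lt_of_lt_of_le [Fintype Q] {x y z : Q} (hxy : x < y) (hyz : y ≤ z) :
    intervalRank y z < intervalRank x z := by
  have := intervalRank_add_le hxy.le hyz
  have := one_le_intervalRank hxy
  omega

@[simp]
theorem intervalRank_self [Fintype Q] (x : Q) : intervalRank x x = 0 := by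
  have := intervalRank_add_le (le_refl x) (le_refl x)
  omega

/-- A strictly decreasing function drops by at least the rank along an interval. -/
theorem StrictAnti.add_intervalRank_le [Fintype Q] {ν : Q → ℕ} (hν : StrictAnti ν) {x y : Q}
    (h : x ≤ y) : ν y + intervalRank x y ≤ ν x := by
  obtain ⟨p, rfl, rfl, hp⟩ := exists_ltSeries_length_eq_intervalRank h
  rw [← hp]
  have key : ∀ n (hn : n < p.length + 1), ν (p ⟨n, hn⟩) + n ≤ ν p.head := by
    intro n
    induction n with
    | zero => exact fun _ => le_rfl
    | succ n ih =>
      intro hn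
      have h1 := ih (by omega)
      have h2 := hν (p.strictMono (show (⟨n, by omega⟩ : Fin (p.length + 1)) < ⟨n + 1, hn⟩ by simp))
      omega
  exact key p.length (by omega)

end IntervalRank

section Rigid

variable {Q : Type*} [PartialOrder Q]

/-- Every element of `T(P)` below `ν` agrees with `ν` at `z`. -/
def IsRigidAt [OrderTop Q] (ν : Q → ℕ) (z : Q) : Prop :=
  ∀ μ : Q → ℕ, IsTP μ → LeTP μ ν → μ z = ν z

theorem isRigidAt_top [OrderTop Q] {ν : Q → ℕ} (hν : IsTP ν) : IsRigidAt ν ⊤ :=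
  fun _ hμ _ => hμ.1.trans hν.1.symm

/-- Rigidity passes from `x` to `z` when `x ≤ y ≥ z` and `ν` drops from `z` to `y` by the rank. -/
theorem IsRigidAt.of_le_add_intervalRank [Fintype Q] [OrderTop Q] {ν : Q → ℕ} {x y z : Q}
    (hx : IsRigidAt ν x) (hxy : x ≤ y) (hzy : z ≤ y) (h : ν z ≤ ν y + intervalRank z y) :
    IsRigidAt ν z := by
  intro μ hμ hle
  have h1 := hx μ hμ hle
  have h2 := hle.2 x y hxy
  have h3 := hμ.2.add_intervalRank_le hzy
  have h4 := hle.1 z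
  omega

theorem IsRigidAt.isMinTP [BoundedOrder Q] {ν : Q → ℕ} (hν : IsTP ν) (h : IsRigidAt ν ⊥) :
    IsMinTP ν := by
  refine ⟨hν, fun μ hμ hle => funext fun z => ?_⟩
  have h1 := h μ hμ hle
  have h2 := hle.2 ⊥ z bot_le
  have h3 := hle.1 z
  omega

/-- If `ν` drops by at least two along every strict pair leaving the lower set `S`, then
minimality of `ν` forces `S` to be empty or to contain `⊤`. -/
theorem IsMinTP.notMem_of_isLowerSet [OrderTop Q] {ν : Q → ℕ} (hν : IsMinTP ν) {S : Set Q}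
    (hS : IsLowerSet S) (htop : ⊤ ∉ S)
    (hdrop : ∀ x y, x < y → x ∈ S → y ∉ S → ν y + 2 ≤ ν x) (z : Q) : z ∉ S := by
  classical
  intro hz
  have hpos : ∀ x ∈ S, 1 ≤ ν x := fun x hx => by
    have := hν.1.2 (lt_top_iff_ne_top.2 fun h : x = ⊤ => htop (h ▸ hx))
    omega
  have heq := hν.2 (fun x => if x ∈ S then ν x - 1 else ν x) ?_ ⟨?_, ?_⟩
  · have := congrFun heq z
    have := hpos z hz
    simp only [hz, if_true] at *
    omega
  · refine ⟨by simp [htop, hν.1.1], fun x y hxy => ?_⟩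
    have h1 := hν.1.2 hxy
    have h2 := hdrop x y hxy
    have h3 := hpos y
    have h4 := @hS y x hxy.le
    dsimp only
    split_ifs with hx hy hy <;>
      simp only [hx, hy, true_implies, not_true_eq_false, not_false_eq_true] at * <;> omega
  · intro x
    dsimp only
    split_ifs <;> omega
  · intro x y hxy
    have h3 := hpos y
    have h5 := hpos x
    have h4 := @hS y x hxy
    by_cases hx : x ∈ S <;> by_cases hy : y ∈ S <;> simp_all

/-- Lowering a minimal element by `k`, but not below the corank, gives a minimal element. -/
theorem IsMinTP.max_intervalRank_sub [Fintype Q] [OrderTop Q] {ν : Q → ℕ} (hν : IsMinTP ν)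
    (k : ℕ) : IsMinTP fun z => max (intervalRank z ⊤) (ν z - k) := by
  have hTP : IsTP fun z => max (intervalRank z ⊤) (ν z - k) := by
    refine ⟨by simp [hν.1.1], fun x y hxy => ?_⟩
    have h1 := intervalRank_lt_of_lt_of_le hxy le_top
    have h2 := hν.1.2 hxy
    dsimp only
    omega
  refine ⟨hTP, fun μ hμ hle => ?_⟩
  have hlow : IsLowerSet {z | μ z < max (intervalRank z ⊤) (ν z - k)} := by
    intro y x hxy hy
    have h1 := hle.2 x y hxy
    simp only [Set.mem_ofPred_eq] at *
    omega
  have hempty := hν.notMem_of_isLowerSet hlow (by simp [hν.1.1]) fun x y hxy hx hy => by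
    have h1 := hμ.2 hxy
    have h2 := hμ.2.add_intervalRank_le (le_top (a := x))
    have h3 := hle.1 y
    simp only [Set.mem_ofPred_eq] at *
    omega
  funext z
  have h1 := hempty z
  have h2 := hle.1 z
  simp only [Set.mem_ofPred_eq] at *
  omega

end Rigid

section LowerBound

variable {Q : Type*} [PartialOrder Q]

/-- From a zigzag satisfying (iii) of condition N one builds an element of `T(P)` which is
rigid everywhere (stated for larger `ν'` agreeing with it at the `x i`, as the induction needs),
and whose values at the admissible starting points `a` are at least
`r(y₁,x₁,…,y_t,x_t)` computed with `x₀` replaced by `a`. -/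
theorem exists_isTP_of_zigzag [Fintype Q] [OrderTop Q] (t : ℕ) (y x : Fin t → Q)
    (hy : ∀ i, y i ≠ ⊤) (hxy : ∀ i, x i < y i)
    (hstep : ∀ (i : ℕ) (h₁ : i < t) (h₂ : i + 1 < t), x ⟨i, h₁⟩ < y ⟨i + 1, h₂⟩)
    (hN : ∀ i j : Fin t, i < j → ¬ x j ≤ y i) :
    ∃ ν : Q → ℕ, IsTP ν ∧
      (∀ a, (∀ h : 0 < t, a ≤ y ⟨0, h⟩) →
        (∑ i : Fin t, ((intervalRank (seqX a x i.castSucc) (y i) : ℤ) -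
          (intervalRank (x i) (y i) : ℤ))) +
          (intervalRank (seqX a x (Fin.last t)) (⊤ : Q) : ℤ) ≤ ν a) ∧
      ∀ ν' : Q → ℕ, IsTP ν' → (∀ z, ν z ≤ ν' z) → (∀ k, ν' (x k) = ν (x k)) →
        ∀ z, ν' z = ν z → IsRigidAt ν' z := by
  classical
  induction t with
  | zero =>
    refine ⟨fun z => intervalRank z ⊤,
      ⟨intervalRank_self _, fun a b hab => intervalRank_lt_of_lt_of_le hab le_top⟩, ?_, ?_⟩
    · intro a _
      simp [seqX]
    · intro ν' hν' _ _ z hz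
      exact (isRigidAt_top hν').of_le_add_intervalRank le_rfl le_top (by simp [hz])
  | succ t ih =>
    obtain ⟨ν, hν, hval, hrig⟩ := ih (Fin.tail y) (Fin.tail x) (fun i => hy i.succ)
      (fun i => hxy i.succ) (fun i h₁ h₂ => hstep (i + 1) (by omega) (by omega))
      (fun i j hij => hN i.succ j.succ (Fin.succ_lt_succ_iff.2 hij))
    have hb := hν.2.add_intervalRank_le (hxy 0).le
    set f : Q → ℕ := fun z => if z ≤ y 0 then
      max (ν z) (ν (x 0) - intervalRank (x 0) (y 0) + intervalRank z (y 0)) else ν z with hf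
    have hνf : ∀ z, ν z ≤ f z := fun z => by
      simp only [hf]
      split_ifs <;> omega
    have hf0 : f (x 0) = ν (x 0) := by
      simp only [hf, (hxy 0).le, if_true]
      omega
    have hfs : ∀ k : Fin t, f (x k.succ) = ν (x k.succ) := fun k => by
      simp only [hf, hN 0 k.succ (Fin.succ_pos k), if_false]
    refine ⟨f, ⟨?_, ?_⟩, ?_, ?_⟩
    · simp [hf, hy 0, hν.1]
    · intro a b hab
      have h1 := hν.2 hab
      by_cases hb0 : b ≤ y 0
      · have h2 := intervalRank_lt_of_lt_of_le hab hb0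
        simp only [hf, hb0, hab.le.trans hb0, if_true]
        omega
      · have := hνf a
        simp only [hf, hb0, if_false] at *
        omega
    · intro a ha
      have ha0 : a ≤ y 0 := ha (by omega)
      have h1 := hval (x 0) fun h => (hstep 0 (by omega) (by omega)).le
      have h2 : ν (x 0) - intervalRank (x 0) (y 0) + intervalRank a (y 0) ≤ f a := by
        simp only [hf, ha0, if_true]
        omega
      have h3 : ∀ i : Fin (t + 1), seqX a x i.succ = seqX (x 0) (Fin.tail x) i := by
        intro i
        simp only [seqX, Fin.cons_succ]
        exact (congrFun (Fin.cons_self_tail x) i).symm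
      have h4 : seqX a x (Fin.castSucc 0) = a := rfl
      rw [Fin.sum_univ_succ, ← Fin.succ_last, h3, h4]
      simp only [← Fin.succ_castSucc, h3]
      simp only [Fin.tail] at h1 ⊢
      omega
    · intro ν' hν' hle hx z hz
      have hx0 : IsRigidAt ν' (x 0) := hrig ν' hν' (fun z => (hνf z).trans (hle z))
        (fun k => (hx k.succ).trans (hfs k)) _ ((hx 0).trans hf0)
      by_cases hzν : f z = ν z
      · exact hrig ν' hν' (fun z => (hνf z).trans (hle z))
          (fun k => (hx k.succ).trans (hfs k)) _ (hz.trans hzν)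
      · have hzy : z ≤ y 0 := by
          by_contra h
          simp [hf, h] at hzν
        refine hx0.of_le_add_intervalRank (hxy 0).le hzy ?_
        have h1 := hle (y 0)
        have h2 := hνf z
        simp only [hf, hzy, le_refl, if_true, intervalRank_self] at *
        omega

theorem CondN.exists_isMinTP [Fintype Q] [BoundedOrder Q] {t : ℕ} {y x : Fin t → Q}
    (hy : ∀ i, y i ≠ ⊤) (h : CondN t y x) : ∃ ν : Q → ℕ, IsMinTP ν ∧ rSeq t y x ≤ ν ⊥ := by
  obtain ⟨ν, hν, hval, hrig⟩ := exists_isTP_of_zigzag t y x hy h.2.1 h.2.2.1 h.2.2.2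
  exact ⟨ν, (hrig ν hν (fun _ => le_rfl) (fun _ => rfl) ⊥ rfl).isMinTP hν,
    hval ⊥ fun _ => bot_le⟩

end LowerBound

section UpperBound

variable {Q : Type*} [PartialOrder Q]

/-- `ν` drops from `x` to `y` exactly by the rank of `[x,y]`. -/
def IsTight (ν : Q → ℕ) (x y : Q) : Prop :=
  x ≤ y ∧ ν x = ν y + intervalRank x y

theorem IsTight.refl [Fintype Q] (ν : Q → ℕ) (x : Q) : IsTight ν x x :=
  ⟨le_rfl, by simp⟩

theorem IsTight.trans [Fintype Q] {ν : Q → ℕ} (hν : StrictAnti ν) {x y z : Q}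
    (hxy : IsTight ν x y) (hyz : IsTight ν y z) : IsTight ν x z := by
  refine ⟨hxy.1.trans hyz.1, ?_⟩
  have h1 := hν.add_intervalRank_le (hxy.1.trans hyz.1)
  have h2 := intervalRank_add_le hxy.1 hyz.1
  have h3 := hxy.2
  have h4 := hyz.2
  omega

/-- The elements reached from `⊥` by a tight ascent followed by `k` rounds of a descent and a
tight ascent. -/
def tightLayer [OrderBot Q] (ν : Q → ℕ) : ℕ → Set Q
  | 0 => {z | IsTight ν ⊥ z}
  | k + 1 => {z | ∃ y ∈ tightLayer ν k, ∃ x ≤ y, IsTight ν x z}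

theorem tightLayer_of_isTight [Fintype Q] [OrderBot Q] {ν : Q → ℕ} (hν : StrictAnti ν) {k : ℕ}
    {y z : Q} (hy : y ∈ tightLayer ν k) (hyz : IsTight ν y z) : z ∈ tightLayer ν k := by
  cases k with
  | zero => exact IsTight.trans hν hy hyz
  | succ k =>
    obtain ⟨w, hw, x, hx, hxy⟩ := hy
    exact ⟨w, hw, x, hx, hxy.trans hν hyz⟩

/-- For minimal `ν` the top element is reached. -/
theorem IsMinTP.exists_top_mem_tightLayer [Fintype Q] [BoundedOrder Q] {ν : Q → ℕ}
    (hν : IsMinTP ν) : ∃ k, ⊤ ∈ tightLayer ν k := by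
  by_contra! htop
  refine hν.notMem_of_isLowerSet (S := {z | ∃ k, ∃ y ∈ tightLayer ν k, z ≤ y}) ?_ ?_ ?_ ⊥
    ⟨0, ⊥, IsTight.refl ν ⊥, le_rfl⟩
  · rintro a b hba ⟨k, y, hy, ha⟩
    exact ⟨k, y, hy, hba.trans ha⟩
  · rintro ⟨k, y, hy, h⟩
    exact htop k (top_le_iff.1 h ▸ hy)
  · rintro a b hab ⟨k, y, hy, ha⟩ hb
    have h1 := hν.1.2.add_intervalRank_le hab.le
    have h2 := one_le_intervalRank hab
    by_contra hlt
    exact hb ⟨k + 1, b, ⟨y, hy, a, ha, hab.le, by omega⟩, le_rfl⟩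

/-- An element appearing first in layer `k` is the end of a zigzag whose `i`-th peak appears first
in layer `i`. -/
theorem exists_zigzag_of_mem_tightLayer [OrderBot Q] {ν : Q → ℕ}
    (k : ℕ) (z : Q) (hz : z ∈ tightLayer ν k) (hmin : ∀ j < k, z ∉ tightLayer ν j) :
    ∃ x y : ℕ → Q, x 0 = ⊥ ∧ y k = z ∧ (∀ i ≤ k, IsTight ν (x i) (y i)) ∧
      (∀ i < k, x (i + 1) ≤ y i) ∧
      ∀ i ≤ k, y i ∈ tightLayer ν i ∧ ∀ j < i, y i ∉ tightLayer ν j := by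
  induction k generalizing z with
  | zero =>
    refine ⟨fun _ => ⊥, fun _ => z, rfl, rfl, fun _ _ => hz, by simp, ?_⟩
    intro i hi
    obtain rfl : i = 0 := by omega
    exact ⟨hz, by simp⟩
  | succ k ih =>
    obtain ⟨w, hw, u, huw, huz⟩ := hz
    have hwmin : ∀ j < k, w ∉ tightLayer ν j := fun j hj hwj =>
      hmin (j + 1) (by omega) ⟨w, hwj, u, huw, huz⟩
    obtain ⟨x, y, hx0, hyk, htight, hdesc, hlayer⟩ := ih w hw hwmin
    refine ⟨fun i => if i ≤ k then x i else u, fun i => if i ≤ k then y i else z,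
      by simpa using hx0, by simp, ?_, ?_, ?_⟩
    · intro i hi
      by_cases hik : i ≤ k
      · simpa [hik] using htight i hik
      · simpa [hik] using huz
    · intro i hi
      by_cases hik : i + 1 ≤ k
      · simpa [hik, (by omega : i ≤ k)] using hdesc i hik
      · obtain rfl : i = k := by omega
        simpa [hyk] using huw
    · intro i hi
      by_cases hik : i ≤ k
      · simpa [hik] using hlayer i hik
      · obtain rfl : i = k + 1 := by omega
        simpa using ⟨⟨w, hw, u, huw, huz⟩, fun j hj => hmin j (by omega)⟩

theorem IsMinTP.exists_condN [Fintype Q] [BoundedOrder Q] {ν : Q → ℕ} (hν : IsMinTP ν) :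
    ∃ (t : ℕ) (y x : Fin t → Q), (∀ i, y i ≠ ⊤) ∧ (∀ i, x i ≠ ⊤) ∧ CondN t y x ∧
      (ν ⊥ : ℤ) ≤ rSeq t y x := by
  classical
  have hex := hν.exists_top_mem_tightLayer
  obtain ⟨x, y, hx0, hyt, htight, hdesc, hlayer⟩ := exists_zigzag_of_mem_tightLayer
    (Nat.find hex) ⊤ (Nat.find_spec hex) fun j hj => Nat.find_min hex hj
  have hmin : ∀ j < Nat.find hex, ⊤ ∉ tightLayer ν j := fun j hj => Nat.find_min hex hj
  generalize Nat.find hex = t at *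
  have hytop : ∀ i < t, y i ≠ ⊤ := fun i hi h => hmin i hi (h ▸ (hlayer i hi.le).1)
  have hnot : ∀ i j, i < j → j < t → ¬ x (j + 1) ≤ y i := fun i j hij hj h =>
    (hlayer (j + 1) hj).2 (i + 1) (by omega)
      ⟨y i, (hlayer i (by omega)).1, x (j + 1), h, htight (j + 1) hj⟩
  have hlt : ∀ i < t, x (i + 1) < y i := fun i hi => by
    refine (hdesc i hi).lt_of_ne fun h => ?_
    exact (hlayer (i + 1) hi).2 i (by omega)
      (tightLayer_of_isTight hν.1.2 (hlayer i hi.le).1 (h ▸ htight (i + 1) hi))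
  have hstep : ∀ i, i + 1 < t → x (i + 1) < y (i + 1) := fun i hi => by
    refine (htight (i + 1) hi.le).1.lt_of_ne fun h => ?_
    exact hnot i (i + 1) (by omega) hi
      ((hdesc (i + 1) hi).trans (h.symm.le.trans (hdesc i (by omega))))
  refine ⟨t, fun i => y i, fun i => x (i + 1), fun i => hytop i i.2,
    fun i h => hytop i i.2 (top_le_iff.1 (h ▸ hdesc i i.2)),
    ⟨fun h h1 => ?_, fun i => hlt i i.2, fun i _ h₂ => hstep i h₂,
      fun i j hij => hnot i j hij j.2⟩, ?_⟩
  · have h2 := htight 1 h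
    have h1 : x 1 = ⊥ := h1
    rw [h1] at h2
    exact (hlayer 1 h).2 0 one_pos h2
  · have hseq : ∀ i : Fin (t + 1), seqX ⊥ (fun i : Fin t => x (i + 1)) i = x i := by
      intro i
      refine Fin.cases ?_ (fun i => ?_) i
      · simp [seqX, hx0]
      · simp [seqX]
    have hsum : ∑ i : Fin t, ((ν (x i) : ℤ) - ν (x (i + 1))) = ν ⊥ - ν (x t) := by
      rw [Fin.sum_univ_eq_sum_range (fun i => (ν (x i) : ℤ) - ν (x (i + 1))) t,
        Finset.sum_range_sub' (fun i => (ν (x i) : ℤ)), hx0]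
    have hle : ∑ i : Fin t, ((ν (x i) : ℤ) - ν (x (i + 1))) ≤ ∑ i : Fin t,
        ((intervalRank (x i) (y i) : ℤ) - (intervalRank (x (i + 1)) (y i) : ℤ)) := by
      refine Finset.sum_le_sum fun i _ => ?_
      have h1 := (htight i i.2.le).2
      have h2 := hν.1.2.add_intervalRank_le (hdesc i i.2)
      omega
    have hlast := (htight t le_rfl).2
    rw [hyt, hν.1.1] at hlast
    simp only [rSeq, hseq, Fin.val_castSucc, Fin.val_last]
    omega

end UpperBound

/-- with `r = rank P⁺` and `rmax` the maximum of `r(y₁,…,x_t)` over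
sequences with condition N, there is a minimal element `ν` of `T(P)` with
`ν(x₀) = i` if and only if `r ≤ i ≤ rmax`. -/
theorem minimal_TP_degrees
    {Q : Type*} [Fintype Q] [PartialOrder Q] [BoundedOrder Q]
    (rmax : ℤ)
    (hrmax : IsGreatest
      {v : ℤ | ∃ (t : ℕ) (y x : Fin t → Q),
        (∀ i, y i ≠ ⊤) ∧ (∀ i, x i ≠ ⊤) ∧ CondN t y x ∧ v = rSeq t y x} rmax) :
    ∀ i : ℤ,
      (∃ ν : Q → ℕ, IsMinTP ν ∧ (ν (⊥ : Q) : ℤ) = i) ↔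
        ((intervalRank (⊥ : Q) (⊤ : Q) : ℤ) ≤ i ∧ i ≤ rmax) := by
  intro i
  constructor
  · rintro ⟨ν, hν, rfl⟩
    obtain ⟨t, y, x, hy, hx, hN, hle⟩ := hν.exists_condN
    have h1 := hν.1.2.add_intervalRank_le (bot_le (a := (⊤ : Q)))
    exact ⟨by omega, hle.trans (hrmax.2 ⟨t, y, x, hy, hx, hN, rfl⟩)⟩
  · rintro ⟨hr, hi⟩
    obtain ⟨t, y, x, hy, -, hN, rfl⟩ := hrmax.1
    obtain ⟨ν, hν, hle⟩ := hN.exists_isMinTP hy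
    refine ⟨_, hν.max_intervalRank_sub (ν ⊥ - i.toNat), ?_⟩
    omega
end

section
/- Let P⁺ be a poset of type (a) with parameters m ≥ 3 and n, n′ ≥ 0, and set r = rank P⁺ = n + m + n′ + 1. Then for all α₁ ≤ α₂ in P⁺, rank[x₀,α₁] + rank[α₁,α₂] + rank[α₂,∞] < r if and only if (α₁,α₂) = (z′₁, z_m) or (α₁,α₂) = (z₁, z′_m). In particular rank[x₀,x] + rank[x,∞] = r for every x ∈ P⁺. -/
/-- The covering relations of a poset of type (a) with parameters `m ≥ 3`, `n, n' ≥ 0`. -/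
def TypeACovers {Q : Type*} (m n n' : ℕ) (hm : 3 ≤ m)
    (z z' : Fin m → Q) (w : Fin (n + 1) → Q) (w' : Fin (n' + 1) → Q)
    (a b : Q) : Prop :=
  (∃ i : Fin n, a = w i.castSucc ∧ b = w i.succ) ∨
  (∃ i : Fin n', a = w' i.castSucc ∧ b = w' i.succ) ∨
  (a = w (Fin.last n) ∧ b = z ⟨0, by omega⟩) ∨
  (a = w (Fin.last n) ∧ b = z' ⟨0, by omega⟩) ∨
  (∃ (i : ℕ) (h : i + 1 < m), a = z ⟨i, by omega⟩ ∧ b = z ⟨i + 1, h⟩) ∨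
  (∃ (i : ℕ) (h : i + 1 < m), a = z' ⟨i, by omega⟩ ∧ b = z' ⟨i + 1, h⟩) ∨
  (a = z ⟨m - 1, by omega⟩ ∧ b = w' 0) ∨
  (a = z' ⟨m - 1, by omega⟩ ∧ b = w' 0) ∨
  (a = z' ⟨0, by omega⟩ ∧ b = z ⟨m - 1, by omega⟩) ∨
  (a = z ⟨0, by omega⟩ ∧ b = z' ⟨m - 1, by omega⟩)

/-- A strictly monotone height function bounds the rank of an interval. -/
theorem intervalRank_add_le_s15 {Q : Type*} [PartialOrder Q] {h : Q → ℕ} (hh : StrictMono h)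
    {a b : Q} (hab : a ≤ b) : intervalRank a b + h a ≤ h b := by
  have hle := hh.monotone hab
  suffices intervalRank a b ≤ h b - h a by omega
  refine csSup_le' ?_
  rintro k ⟨c, hc, rfl, rfl⟩
  let p : LTSeries Q := ⟨k, c, fun i => hc i.castSucc_lt_succ⟩
  have := (p.map h hh).head_add_length_le_nat
  change h (c 0) + k ≤ h (c (Fin.last k)) at this
  omega

/-- The rank of a covering pair is at most one. -/
theorem intervalRank_le_one_of_covBy {Q : Type*} [PartialOrder Q] {a b : Q} (hab : a ⋖ b) :
    intervalRank a b ≤ 1 := by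
  refine csSup_le' ?_
  rintro k ⟨c, hc, rfl, rfl⟩
  by_contra! hk
  refine hab.2 (c := c ⟨1, by omega⟩) (hc ?_) (hc ?_)
  · simp [Fin.lt_def]
  · simpa [Fin.lt_def] using hk

/-- `GradedPath h a b` means that `b` is reached from `a` by covering steps raising `h` by one. -/
def GradedPath {Q : Type*} [PartialOrder Q] (h : Q → ℕ) : Q → Q → Prop :=
  Relation.ReflTransGen fun a b => a ⋖ b ∧ h b = h a + 1

theorem GradedPath.exists_ltSeries {Q : Type*} [PartialOrder Q] {h : Q → ℕ} {a b : Q}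
    (hab : GradedPath h a b) :
    ∃ p : LTSeries Q, p.head = a ∧ p.last = b ∧ p.length + h a = h b := by
  induction hab with
  | refl => exact ⟨RelSeries.singleton _ a, rfl, rfl, by simp⟩
  | tail _ hbc ih =>
    obtain ⟨p, rfl, rfl, hp⟩ := ih
    refine ⟨p.snoc _ hbc.1.lt, by simp, by simp, ?_⟩
    simp only [RelSeries.snoc_length, hbc.2]
    omega

theorem GradedPath.intervalRank_add_eq {Q : Type*} [PartialOrder Q] {h : Q → ℕ}
    (hh : StrictMono h) {a b : Q} (hab : GradedPath h a b) :
    intervalRank a b + h a = h b := by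
  obtain ⟨p, rfl, rfl, hp⟩ := hab.exists_ltSeries
  refine le_antisymm (intervalRank_add_le_s15 hh (LTSeries.head_le_last p)) ?_
  rw [← hp]
  refine Nat.add_le_add_right (le_csSup ⟨h p.last, ?_⟩ ?_) _
  · rintro k ⟨c, hc, h0, h1⟩
    let q : LTSeries Q := ⟨k, c, fun i => hc i.castSucc_lt_succ⟩
    have := (q.map h hh).head_add_length_le_nat
    change h (c 0) + k ≤ h (c (Fin.last k)) at this
    rw [h1] at this
    omega
  · exact ⟨p.toFun, p.strictMono, rfl, rfl⟩

theorem GradedPath.of_succ {Q : Type*} [PartialOrder Q] {h : Q → ℕ} {m : ℕ} (z : Fin m → Q)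
    (hz : ∀ (i : ℕ) (hi : i + 1 < m),
      z ⟨i, by omega⟩ ⋖ z ⟨i + 1, hi⟩ ∧ h (z ⟨i + 1, hi⟩) = h (z ⟨i, by omega⟩) + 1)
    (i : ℕ) (hi : i < m) : GradedPath h (z ⟨0, by omega⟩) (z ⟨i, hi⟩) := by
  induction i with
  | zero => exact Relation.ReflTransGen.refl
  | succ i ih => exact (ih (by omega)).tail (hz i hi)

/-- A poset of type (a) carries a height function and a function telling its four chains apart. -/
theorem exists_typeA_height {Q : Type*} (m n n' : ℕ)
    (z z' : Fin m → Q) (w : Fin (n + 1) → Q) (w' : Fin (n' + 1) → Q)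
    (hbij : Function.Bijective
      (Sum.elim (Sum.elim z z') (Sum.elim w w') :
        (Fin m ⊕ Fin m) ⊕ (Fin (n + 1) ⊕ Fin (n' + 1)) → Q)) :
    ∃ h s : Q → ℕ,
      (∀ i, h (z i) = n + 1 + i ∧ s (z i) = 0) ∧ (∀ i, h (z' i) = n + 1 + i ∧ s (z' i) = 1) ∧
      (∀ i, h (w i) = i ∧ s (w i) = 2) ∧ (∀ i, h (w' i) = n + m + 1 + i ∧ s (w' i) = 3) := by
  let e := Equiv.ofBijective _ hbij
  let H : (Fin m ⊕ Fin m) ⊕ (Fin (n + 1) ⊕ Fin (n' + 1)) → ℕ :=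
    Sum.elim (Sum.elim (fun i => n + 1 + i) (fun i => n + 1 + i))
      (Sum.elim (fun i => i) (fun i => n + m + 1 + i))
  let S : (Fin m ⊕ Fin m) ⊕ (Fin (n + 1) ⊕ Fin (n' + 1)) → ℕ :=
    Sum.elim (Sum.elim (fun _ => 0) (fun _ => 1)) (Sum.elim (fun _ => 2) (fun _ => 3))
  have key : ∀ x, H (e.symm (e x)) = H x ∧ S (e.symm (e x)) = S x := fun x => by simp
  exact ⟨H ∘ e.symm, S ∘ e.symm, fun i => key (.inl (.inl i)), fun i => key (.inl (.inr i)),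
    fun i => key (.inr (.inl i)), fun i => key (.inr (.inr i))⟩

theorem strictMono_of_covBy_lt {Q : Type*} [Finite Q] [PartialOrder Q] {h : Q → ℕ}
    (hh : ∀ a b, a ⋖ b → h a < h b) : StrictMono h := by
  classical
  have := Fintype.ofFinite Q
  let _ : LocallyFiniteOrder Q := Fintype.toLocallyFiniteOrder
  intro a b hab
  have hab' := transGen_covBy_of_lt hab
  clear hab
  induction hab' with
  | single hac => exact hh _ _ hac
  | tail _ hcb ih => exact ih.trans (hh _ _ hcb)

theorem typeA_gradedPath_or {Q : Type*} [Finite Q] [PartialOrder Q]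
    (m n n' : ℕ) (hm : 3 ≤ m)
    (z z' : Fin m → Q) (w : Fin (n + 1) → Q) (w' : Fin (n' + 1) → Q)
    (hcov : ∀ a b : Q, a ⋖ b ↔ TypeACovers m n n' hm z z' w w' a b) {h s : Q → ℕ}
    (hz : ∀ i, h (z i) = n + 1 + i ∧ s (z i) = 0)
    (hz' : ∀ i, h (z' i) = n + 1 + i ∧ s (z' i) = 1)
    (hw : ∀ i, h (w i) = i ∧ s (w i) = 2)
    (hw' : ∀ i, h (w' i) = n + m + 1 + i ∧ s (w' i) = 3) {a b : Q} (hab : a ≤ b) :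
    GradedPath h a b ∨ (a = z' ⟨0, by omega⟩ ∧ b = z ⟨m - 1, by omega⟩) ∨
      (a = z ⟨0, by omega⟩ ∧ b = z' ⟨m - 1, by omega⟩) := by
  classical
  have := Fintype.ofFinite Q
  let _ : LocallyFiniteOrder Q := Fintype.toLocallyFiniteOrder
  have step : ∀ a b, TypeACovers m n n' hm z z' w w' a b → h b = h a + 1 →
      a ⋖ b ∧ h b = h a + 1 := fun a b hc he => ⟨(hcov a b).2 hc, he⟩
  have pathz := GradedPath.of_succ (h := h) z (fun i hi =>
    step _ _ (by unfold TypeACovers; grind) (by simp only [(hz _).1]; omega))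
  have pathz' := GradedPath.of_succ (h := h) z' (fun i hi =>
    step _ _ (by unfold TypeACovers; grind) (by simp only [(hz' _).1]; omega))
  have wz := step (w (Fin.last n)) (z ⟨0, by omega⟩) (by unfold TypeACovers; grind)
    (by simp [(hz _).1, (hw _).1])
  have wz' := step (w (Fin.last n)) (z' ⟨0, by omega⟩) (by unfold TypeACovers; grind)
    (by simp [(hz' _).1, (hw _).1])
  have zw := step (z ⟨m - 1, by omega⟩) (w' 0) (by unfold TypeACovers; grind)
    (by simp only [(hz _).1, (hw' _).1, Fin.val_zero]; omega)
  have zw' := step (z' ⟨m - 1, by omega⟩) (w' 0) (by unfold TypeACovers; grind)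
    (by simp only [(hz' _).1, (hw' _).1, Fin.val_zero]; omega)
  have into : ∀ d, (d ⋖ z ⟨0, by omega⟩ ∨ d ⋖ z' ⟨0, by omega⟩) → d = w (Fin.last n) := by
    rintro d (hd | hd) <;> simp only [hcov, TypeACovers] at hd <;> grind
  have out : ∀ d, (z ⟨m - 1, by omega⟩ ⋖ d ∨ z' ⟨m - 1, by omega⟩ ⋖ d) → d = w' 0 := by
    rintro d (hd | hd) <;> simp only [hcov, TypeACovers] at hd <;> grind
  induction le_iff_reflTransGen_covBy.1 hab with
  | refl => exact .inl .refl
  | @tail b c hab' hbc ih =>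
    rcases ih (le_iff_reflTransGen_covBy.2 hab') with hp | ⟨rfl, rfl⟩ | ⟨rfl, rfl⟩
    · by_cases hg : h c = h b + 1
      · exact .inl (hp.tail ⟨hbc, hg⟩)
      have hsp : (b = z' ⟨0, by omega⟩ ∧ c = z ⟨m - 1, by omega⟩) ∨
          (b = z ⟨0, by omega⟩ ∧ c = z' ⟨m - 1, by omega⟩) := by
        have hbc' := (hcov _ _).1 hbc
        simp only [TypeACovers] at hbc'
        grind
      rcases hsp with ⟨rfl, rfl⟩ | ⟨rfl, rfl⟩
      · rcases Relation.ReflTransGen.cases_tail hp with rfl | ⟨d, had, hd⟩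
        · exact .inr (.inl ⟨rfl, rfl⟩)
        · obtain rfl := into d (.inr hd.1)
          exact .inl ((had.tail wz).trans (pathz _ _))
      · rcases Relation.ReflTransGen.cases_tail hp with rfl | ⟨d, had, hd⟩
        · exact .inr (.inr ⟨rfl, rfl⟩)
        · obtain rfl := into d (.inl hd.1)
          exact .inl ((had.tail wz').trans (pathz' _ _))
    · obtain rfl := out c (.inl hbc)
      exact .inl ((pathz' _ _).tail zw')
    · obtain rfl := out c (.inr hbc)
      exact .inl ((pathz _ _).tail zw)

/-- in a poset of type (a), with `r = rank P⁺ = n + m + n' + 1`, for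
`α₁ ≤ α₂` the strict inequality
`rank[x₀,α₁] + rank[α₁,α₂] + rank[α₂,∞] < r` holds iff `(α₁,α₂) = (z'₁, z_m)` or
`(α₁,α₂) = (z₁, z'_m)`; in particular `rank[x₀,x] + rank[x,∞] = r` for every `x`. -/
theorem typeA_rank_characterization
    {Q : Type*} [Fintype Q] [PartialOrder Q]
    (m n n' : ℕ) (hm : 3 ≤ m)
    (z z' : Fin m → Q) (w : Fin (n + 1) → Q) (w' : Fin (n' + 1) → Q)
    (hbij : Function.Bijective
      (Sum.elim (Sum.elim z z') (Sum.elim w w') :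
        (Fin m ⊕ Fin m) ⊕ (Fin (n + 1) ⊕ Fin (n' + 1)) → Q))
    (hcov : ∀ a b : Q, a ⋖ b ↔ TypeACovers m n n' hm z z' w w' a b)
    (hbot : ∀ q : Q, w 0 ≤ q)
    (htop : ∀ q : Q, q ≤ w' (Fin.last n')) :
    intervalRank (w 0) (w' (Fin.last n')) = n + m + n' + 1 ∧
    (∀ a₁ a₂ : Q, a₁ ≤ a₂ →
      (intervalRank (w 0) a₁ + intervalRank a₁ a₂ + intervalRank a₂ (w' (Fin.last n')) <
          n + m + n' + 1 ↔
        ((a₁ = z' ⟨0, by omega⟩ ∧ a₂ = z ⟨m - 1, by omega⟩) ∨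
         (a₁ = z ⟨0, by omega⟩ ∧ a₂ = z' ⟨m - 1, by omega⟩)))) ∧
    (∀ q : Q,
      intervalRank (w 0) q + intervalRank q (w' (Fin.last n')) = n + m + n' + 1) := by
  obtain ⟨h, s, hz, hz', hw, hw'⟩ := exists_typeA_height m n n' z z' w w' hbij
  have hh : StrictMono h := by
    refine strictMono_of_covBy_lt fun a b hab => ?_
    have hab' := (hcov a b).1 hab
    simp only [TypeACovers] at hab'
    grind
  have hpath := fun {a b : Q} (hab : a ≤ b) =>
    typeA_gradedPath_or m n n' hm z z' w w' hcov hz hz' hw hw' hab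
  have hrank_bot : ∀ q, intervalRank (w 0) q = h q := by
    intro q
    rcases hpath (hbot q) with hp | hp | hp
    · have := hp.intervalRank_add_eq hh
      simpa [(hw 0).1] using this
    · grind
    · grind
  have hrank_top : ∀ q, intervalRank q (w' (Fin.last n')) + h q = n + m + n' + 1 := by
    intro q
    rcases hpath (htop q) with hp | hp | hp
    · rw [hp.intervalRank_add_eq hh, (hw' _).1, Fin.val_last]
      omega
    · grind
    · grind
  refine ⟨?_, fun a b hab => ⟨fun hlt => ?_, ?_⟩, fun q => ?_⟩
  · rw [hrank_bot, (hw' _).1, Fin.val_last]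
    omega
  · refine (hpath hab).resolve_left fun hp => ?_
    have := hp.intervalRank_add_eq hh
    have := hrank_top b
    rw [hrank_bot] at hlt
    omega
  · have hone : ∀ x y, TypeACovers m n n' hm z z' w w' x y → h x + 1 < h y →
        intervalRank (w 0) x + intervalRank x y + intervalRank y (w' (Fin.last n')) <
          n + m + n' + 1 := by
      intro x y hxy hlt
      have := intervalRank_le_one_of_covBy ((hcov x y).2 hxy)
      have := hrank_top y
      rw [hrank_bot]
      omega
    rintro (⟨rfl, rfl⟩ | ⟨rfl, rfl⟩)
    · exact hone _ _ (by unfold TypeACovers; grind) (by simp only [(hz _).1, (hz' _).1]; omega)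
    · exact hone _ _ (by unfold TypeACovers; grind) (by simp only [(hz _).1, (hz' _).1]; omega)
  · rw [hrank_bot, add_comm, hrank_top]
end
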